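/- There exists a real number a with −3 < a < −2 satisfying a(a+1)³ + 3a + 1 = 0, and for this a the function g(z) = a(z−1)³/(1−3z) satisfies: g(1) = 0, g(0) = −a, and g(−a) = 1, so that 1 ↦ 0 ↦ −a ↦ 1 is a cycle of length three; moreover, for every complex z ≠ 1/3 the derivative of g vanishes at z if and only if z = 0 or z = 1. -/

import Mathlib

/-- The cubic rational map obtained by blowing up the airplane: there is a real
`a ∈ (-3, -2)` with `a(a+1)³ + 3a + 1 = 0`, and for `g(z) = a(z-1)³/(1-3z)` one has the
cycle `1 ↦ 0 ↦ -a ↦ 1`; moreover away from the pole `1/3` the derivative of `g` vanishes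
exactly at `0` and `1`. -/
theorem exists_airplane_blowup_map :
    ∃ a : ℝ, -3 < a ∧ a < -2 ∧ a * (a + 1) ^ 3 + 3 * a + 1 = 0 ∧
      (fun z : ℂ => (a : ℂ) * (z - 1) ^ 3 / (1 - 3 * z)) 1 = 0 ∧
      (fun z : ℂ => (a : ℂ) * (z - 1) ^ 3 / (1 - 3 * z)) 0 = -(a : ℂ) ∧
      (fun z : ℂ => (a : ℂ) * (z - 1) ^ 3 / (1 - 3 * z)) (-(a : ℂ)) = 1 ∧
      ∀ z : ℂ, z ≠ 1 / 3 →
        (deriv (fun z : ℂ => (a : ℂ) * (z - 1) ^ 3 / (1 - 3 * z)) z = 0 ↔ z = 0 ∨ z = 1) := by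
  obtain ⟨a, ⟨h1, h2⟩, h3⟩ : (0 : ℝ) ∈
      Set.image (fun a : ℝ => a * (a + 1) ^ 3 + 3 * a + 1) (Set.Ioo (-3) (-2)) := by
    apply intermediate_value_Ioo' (by norm_num) (by fun_prop)
    constructor <;> norm_num
  have h3 : a * (a + 1) ^ 3 + 3 * a + 1 = 0 := h3
  have h4 : (a : ℂ) * (a + 1) ^ 3 + 3 * a + 1 = 0 := by exact_mod_cast h3
  have ha : (a : ℂ) ≠ 0 := by
    have : a ≠ 0 := by linarith
    exact_mod_cast this
  have hb : (1 : ℂ) - 3 * (-(a : ℂ)) ≠ 0 := by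
    have : (1 : ℝ) - 3 * (-a) ≠ 0 := by intro h; linarith
    exact_mod_cast this
  refine ⟨a, h1, h2, h3, by simp, by norm_num, ?_, ?_⟩
  · show (a : ℂ) * (-(a : ℂ) - 1) ^ 3 / (1 - 3 * (-(a : ℂ))) = 1
    rw [div_eq_one_iff_eq hb]
    linear_combination -h4
  · intro z hz
    have hd : (1 : ℂ) - 3 * z ≠ 0 := by
      intro h
      apply hz
      linear_combination (-1 / 3 : ℂ) * h
    have hn : HasDerivAt (fun z : ℂ => (a : ℂ) * (z - 1) ^ 3) ((a : ℂ) * (3 * (z - 1) ^ 2)) z := by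
      simpa using (((hasDerivAt_id z).sub_const 1).pow 3).const_mul (a : ℂ)
    have hm : HasDerivAt (fun z : ℂ => 1 - 3 * z) (-3) z := by
      simpa using ((hasDerivAt_id z).const_mul (3 : ℂ)).const_sub 1
    have key : deriv (fun z : ℂ => (a : ℂ) * (z - 1) ^ 3 / (1 - 3 * z)) z
        = -6 * a * (z * (z - 1) ^ 2) / (1 - 3 * z) ^ 2 := by
      refine (hn.div hm hd).deriv.trans ?_
      congr 1
      ring
    rw [key]
    simp [ha, hd, sub_eq_zero]
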